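/- Let Y ⊂ ℙⁿ be a hypersurface of degree d with a unique singular point y of multiplicity m, general among such pairs, and suppose d = m + n − 2. Then the set of lines in Y through y is finite, of cardinality exactly d!/(m−1)!. -/

import Mathlib

open MvPolynomial

noncomputable section

/-- An (affine) algebraic subset of `ℂ^ι`: the common zero locus of a set of polynomials. -/
def IsAlgSet {ι : Type*} (S : Set (ι → ℂ)) : Prop :=
  ∃ T : Set (MvPolynomial ι ℂ), S = {x | ∀ p ∈ T, eval x p = 0}

/-- Irreducibility of a set in the Zariski sense. -/
def AlgIrreducible {ι : Type*} (S : Set (ι → ℂ)) : Prop :=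
  S.Nonempty ∧ ∀ A B : Set (ι → ℂ), IsAlgSet A → IsAlgSet B →
    S ⊆ A ∪ B → S ⊆ A ∨ S ⊆ B

/-- Krull dimension of a set, via chains of irreducible algebraic subsets. -/
def algDim {ι : Type*} (S : Set (ι → ℂ)) : WithBot ℕ∞ :=
  Order.krullDim {T : Set (ι → ℂ) // IsAlgSet T ∧ AlgIrreducible T ∧ T ⊆ S}

/-- A polynomial function on a complex vector space. -/
def IsPolynomialFun {M : Type*} [AddCommGroup M] [Module ℂ M] (g : M → ℂ) : Prop :=
  ∃ (k : ℕ) (l : Fin k → (M →ₗ[ℂ] ℂ)) (p : MvPolynomial (Fin k) ℂ),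
    ∀ m, g m = eval (fun i => l i m) p

/-- A Zariski-open subset of a complex vector space: the complement of a common zero
locus of polynomial functions. -/
def IsZariskiOpen {M : Type*} [AddCommGroup M] [Module ℂ M] (U : Set M) : Prop :=
  ∃ T : Set (M → ℂ), (∀ g ∈ T, IsPolynomialFun g) ∧ Uᶜ = {m | ∀ g ∈ T, g m = 0}

set_option synthInstance.maxHeartbeats 1000000

/-!
A line through the apex `y = [1 : 0 : … : 0]` is determined by the point `[w]` where it meets the
hyperplane `X 0 = 0`, and it lies in `Y` iff every form `fᵢ` vanishes at `w`, because the distinct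
powers of `X 0` separate the forms. This leaves the zeros in `ℙ^r` of `r = d + 1 - m` forms of
degrees `m, …, d`, of which there are `∏ i = d! / (m - 1)!` when the forms meet transversally.

Transversality is Zariski open by elimination: a system without projective zeros generates, by the
Nullstellensatz, every monomial of some degree `D`; lifting such a presentation to a family of
systems gives a square matrix of coefficients whose determinant is nonzero at the given system, and
wherever it is nonzero the system has no projective zero.

The number of zeros of a transverse system is locally constant in one-parameter families, by the
implicit function theorem and the compactness of projective space. The pencil joining a transverse
system to `X (i + 1) ^ δ i = X 0 ^ δ i`, which has `∏ δ i` zeros, is transverse away from finitely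
many parameters, and `ℂ` minus a finite set is connected.
-/

open scoped Topology

section Elimination

variable {ι σ R : Type*} [CommRing R]

/-- The system `f = 0` has no common zero besides the origin, i.e. it is empty in projective
space when the `f i` are homogeneous of positive degree. -/
def HasOnlyTrivialZero (f : ι → MvPolynomial σ R) : Prop :=
  ∀ v, (∀ i, eval v (f i) = 0) → v = 0

theorem mem_univ_finsuppAntidiag_iff [Fintype σ] [DecidableEq σ] {D : ℕ} {b : σ →₀ ℕ} :
    b ∈ Finset.univ.finsuppAntidiag D ↔ b.degree = D := by
  simp [Finset.mem_finsuppAntidiag, Finsupp.degree_eq_sum]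

theorem eval_homogeneousComponent [Fintype σ] [DecidableEq σ] (v : σ → R) (D : ℕ)
    (p : MvPolynomial σ R) :
    eval v (homogeneousComponent D p) =
      ∑ b ∈ Finset.univ.finsuppAntidiag D, coeff b p * ∏ j, v j ^ b j := by
  rw [eval_eq', Finset.sum_subset (s₂ := Finset.univ.finsuppAntidiag D)]
  · refine Finset.sum_congr rfl fun b hb => ?_
    rw [coeff_homogeneousComponent, if_pos (mem_univ_finsuppAntidiag_iff.1 hb)]
  · intro b hb
    rw [mem_support_iff, coeff_homogeneousComponent, ne_eq, ite_eq_right_iff,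
      Classical.not_imp] at hb
    exact mem_univ_finsuppAntidiag_iff.2 hb.1
  · intro b _ hb
    rw [notMem_support_iff.1 hb, zero_mul]

theorem eval_homogeneousComponent_eq_zero {f : ι → MvPolynomial σ R} {δ : ι → ℕ}
    (hf : ∀ i, (f i).IsHomogeneous (δ i)) {p : MvPolynomial σ R}
    (hp : p ∈ Ideal.span (Set.range f)) {v : σ → R} (hv : ∀ i, eval v (f i) = 0) (D : ℕ) :
    eval v (homogeneousComponent D p) = 0 := by
  let _ := MvPolynomial.gradedAlgebra (σ := σ) (R := R)
  have homogeneous_span : (Ideal.span (Set.range f)).IsHomogeneous (homogeneousSubmodule σ R) :=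
    Ideal.homogeneous_span _ _ (Set.forall_mem_range.2 fun i => ⟨δ i, hf i⟩)
  have span_le_ker : Ideal.span (Set.range f) ≤ RingHom.ker (eval v) :=
    Ideal.span_le.2 (Set.range_subset_iff.2 hv)
  exact span_le_ker (homogeneousComponent_mem_of_mem homogeneous_span hp D)

/-- The coefficients in degree `D` of a family of polynomials indexed by the monomials of degree
`D`. For members of an ideal this is a Macaulay matrix, whose determinant serves as a resultant. -/
def macaulayMatrix [Fintype σ] [DecidableEq σ] (D : ℕ)
    (p : (Finset.univ : Finset σ).finsuppAntidiag D → MvPolynomial σ R) :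
    Matrix ((Finset.univ : Finset σ).finsuppAntidiag D)
      ((Finset.univ : Finset σ).finsuppAntidiag D) R :=
  Matrix.of fun b b' => coeff b' (p b)

theorem hasOnlyTrivialZero_of_det_macaulayMatrix_ne_zero [IsDomain R] [Fintype σ] [DecidableEq σ]
    {f : ι → MvPolynomial σ R} {δ : ι → ℕ} (hf : ∀ i, (f i).IsHomogeneous (δ i)) {D : ℕ}
    {p : (Finset.univ : Finset σ).finsuppAntidiag D → MvPolynomial σ R}
    (hp : ∀ b, p b ∈ Ideal.span (Set.range f)) (hdet : (macaulayMatrix D p).det ≠ 0) :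
    HasOnlyTrivialZero f := by
  intro v hv
  have monomials_mem_ker :
      (macaulayMatrix D p).mulVec (fun b => ∏ j, v j ^ (b : σ →₀ ℕ) j) = 0 := by
    ext b
    rw [Pi.zero_apply, ← eval_homogeneousComponent_eq_zero hf (hp b) hv D,
      eval_homogeneousComponent, ← Finset.sum_coe_sort]
    rfl
  have monomials_eq_zero := Matrix.eq_zero_of_mulVec_eq_zero hdet monomials_mem_ker
  ext j
  have pow_eq_zero := congrFun monomials_eq_zero ⟨Finsupp.single j D, by simp⟩
  obtain ⟨i, -, hi⟩ := Finset.prod_eq_zero_iff.1 pow_eq_zero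
  obtain rfl : j = i := by
    by_contra hij
    simp [hij] at hi
  exact eq_zero_of_pow_eq_zero hi

end Elimination

section Specialization

variable {ι σ K A : Type*} [Field K] [IsAlgClosed K] [CommRing A] [Algebra K A]

theorem HasOnlyTrivialZero.exists_monomial_mem_span [Finite σ] {f : ι → MvPolynomial σ K}
    (hf : HasOnlyTrivialZero f) :
    ∃ D, ∀ b : σ →₀ ℕ, b.degree = D → monomial b 1 ∈ Ideal.span (Set.range f) := by
  have le_radical : idealOfVars σ K ≤ (Ideal.span (Set.range f)).radical := by
    rw [← vanishingIdeal_zeroLocus_eq_radical (K := K), idealOfVars, Ideal.span_le,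
      Set.range_subset_iff]
    intro j x hx
    have : x = 0 := hf x fun i => by
      simpa [coe_aeval_eq_eval] using hx (f i) (Ideal.subset_span ⟨i, rfl⟩)
    simp [this]
  obtain ⟨D, hD⟩ := Ideal.exists_pow_le_of_le_radical_of_fg le_radical (idealOfVars_fg σ K)
  exact ⟨D, fun b hb => hD ((monomial_mem_pow_idealOfVars_iff D b one_ne_zero).2 hb.ge)⟩

theorem HasOnlyTrivialZero.exists_forall_map [Finite σ] {f : ι → MvPolynomial σ A}
    {δ : ι → ℕ} (hf : ∀ i, (f i).IsHomogeneous (δ i)) {φ₀ : A →ₐ[K] K}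
    (h₀ : HasOnlyTrivialZero fun i => map (φ₀ : A →+* K) (f i)) :
    ∃ a, φ₀ a ≠ 0 ∧ ∀ φ : A →ₐ[K] K, φ a ≠ 0 →
      HasOnlyTrivialZero fun i => map (φ : A →+* K) (f i) := by
  classical
  cases nonempty_fintype σ
  have map_span (φ : A →ₐ[K] K) : (Ideal.span (Set.range f)).map (map (φ : A →+* K)) =
      Ideal.span (Set.range fun i => map (φ : A →+* K) (f i)) := by
    rw [Ideal.map_span, ← Set.range_comp]
    rfl
  have surjective_φ₀ : Function.Surjective (φ₀ : A →+* K) :=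
    fun k => ⟨algebraMap K A k, φ₀.commutes k⟩
  obtain ⟨D, hD⟩ := h₀.exists_monomial_mem_span
  have lift_monomial (b : (Finset.univ : Finset σ).finsuppAntidiag D) :
      ∃ p ∈ Ideal.span (Set.range f), map (φ₀ : A →+* K) p = monomial b.1 1 := by
    rw [← Ideal.mem_map_iff_of_surjective _ (map_surjective _ surjective_φ₀), map_span]
    exact hD _ (mem_univ_finsuppAntidiag_iff.1 b.2)
  choose p p_mem map_p using lift_monomial
  have map_det (φ : A →ₐ[K] K) :
      φ (macaulayMatrix D p).det = (macaulayMatrix D fun b => map (φ : A →+* K) (p b)).det := by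
    rw [AlgHom.map_det]
    congr 1
  refine ⟨(macaulayMatrix D p).det, ?_, fun φ hφ => ?_⟩
  · have : macaulayMatrix D (fun b => map (φ₀ : A →+* K) (p b)) = 1 := by
      ext b b'
      simp only [macaulayMatrix, Matrix.of_apply, map_p, coeff_monomial, Matrix.one_apply,
        Subtype.ext_iff]
    rw [map_det, this, Matrix.det_one]
    exact one_ne_zero
  · rw [map_det] at hφ
    refine hasOnlyTrivialZero_of_det_macaulayMatrix_ne_zero (fun i => (hf i).map _) (fun b => ?_) hφ
    rw [← map_span]
    exact Ideal.mem_map_of_mem _ (p_mem b)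

end Specialization

section Transverse

variable {R S : Type*} [CommRing R] [CommRing S] {r : ℕ}

/-- The Jacobian matrix of a system of `r` polynomials in the variables `X 1, …, X r`, which are
the coordinates of the affine chart `X 0 = 1`. -/
def affineJacobian (f : Fin r → MvPolynomial (Fin (r + 1)) R) :
    Matrix (Fin r) (Fin r) (MvPolynomial (Fin (r + 1)) R) :=
  Matrix.of fun i j => pderiv j.succ (f i)

/-- The hypersurfaces `f i = 0` in projective space meet transversally, and only off the hyperplane
`X 0 = 0`. Both conditions are encoded at once, as the absence of a projective zero of the system
enlarged by `X 0 * det (affineJacobian f)`, so that elimination theory applies to them. -/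
def IsTransverse (f : Fin r → MvPolynomial (Fin (r + 1)) R) : Prop :=
  HasOnlyTrivialZero (Matrix.vecCons (X 0 * (affineJacobian f).det) f)

theorem isTransverse_iff [IsDomain R] {f : Fin r → MvPolynomial (Fin (r + 1)) R} :
    IsTransverse f ↔ ∀ v, (∀ i, eval v (f i) = 0) → v ≠ 0 →
      v 0 ≠ 0 ∧ ((affineJacobian f).map (eval v)).det ≠ 0 := by
  have eval_det (v) : eval v (affineJacobian f).det = ((affineJacobian f).map (eval v)).det :=
    (eval v).map_det _
  simp only [IsTransverse, HasOnlyTrivialZero, Fin.forall_fin_succ, Matrix.cons_val_zero,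
    Matrix.cons_val_succ, map_mul, eval_X, eval_det, mul_eq_zero]
  refine forall_congr' fun v => ?_
  tauto

theorem isHomogeneous_det {σ n : Type*} [Fintype n] [DecidableEq n]
    {M : Matrix n n (MvPolynomial σ R)} {δ : n → ℕ} (hM : ∀ i j, (M i j).IsHomogeneous (δ i)) :
    M.det.IsHomogeneous (∑ i, δ i) := by
  rw [Matrix.det_apply']
  refine IsHomogeneous.sum _ _ _ fun τ _ => ?_
  rw [← Equiv.sum_comp τ δ, ← zero_add (∑ i, δ (τ i))]
  refine IsHomogeneous.mul ?_ (IsHomogeneous.prod _ _ _ fun i _ => hM _ _)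
  exact_mod_cast isHomogeneous_C σ ((Equiv.Perm.sign τ : ℤ) : R)

theorem isHomogeneous_X_mul_det_affineJacobian {f : Fin r → MvPolynomial (Fin (r + 1)) R}
    {δ : Fin r → ℕ} (hf : ∀ i, (f i).IsHomogeneous (δ i)) :
    (X 0 * (affineJacobian f).det).IsHomogeneous (1 + ∑ i, (δ i - 1)) :=
  (isHomogeneous_X R 0).mul (isHomogeneous_det fun i _ => (hf i).pderiv)

theorem map_X_mul_det_affineJacobian (φ : R →+* S) (f : Fin r → MvPolynomial (Fin (r + 1)) R) :
    map φ (X 0 * (affineJacobian f).det) =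
      X 0 * (affineJacobian fun i => map φ (f i)).det := by
  rw [map_mul, map_X, RingHom.map_det]
  congr 2
  ext1 i j
  exact pderiv_map.symm

theorem IsTransverse.exists_forall_map {K A : Type*} [Field K] [IsAlgClosed K] [CommRing A]
    [Algebra K A] {f : Fin r → MvPolynomial (Fin (r + 1)) A} {δ : Fin r → ℕ}
    (hf : ∀ i, (f i).IsHomogeneous (δ i)) {φ₀ : A →ₐ[K] K}
    (h₀ : IsTransverse fun i => map (φ₀ : A →+* K) (f i)) :
    ∃ a, φ₀ a ≠ 0 ∧ ∀ φ : A →ₐ[K] K, φ a ≠ 0 →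
      IsTransverse fun i => map (φ : A →+* K) (f i) := by
  have map_system (φ : A →ₐ[K] K) :
      (fun i => map (φ : A →+* K)
        (Matrix.vecCons (X 0 * (affineJacobian f).det) f i)) =
      Matrix.vecCons (X 0 * (affineJacobian fun i => map (φ : A →+* K) (f i)).det)
        fun i => map (φ : A →+* K) (f i) := by
    funext i
    cases i using Fin.cases with
    | zero => exact map_X_mul_det_affineJacobian _ f
    | succ i => rfl
  have homogeneous_system (i : Fin (r + 1)) :
      (Matrix.vecCons (X 0 * (affineJacobian f).det) f i).IsHomogeneous
        (Matrix.vecCons (1 + ∑ i, (δ i - 1)) δ i) := by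
    cases i using Fin.cases with
    | zero => exact isHomogeneous_X_mul_det_affineJacobian hf
    | succ i => exact hf i
  simp only [IsTransverse, ← map_system] at h₀ ⊢
  exact h₀.exists_forall_map homogeneous_system

end Transverse

section AffineZeros

variable {R : Type*} [CommRing R] {r : ℕ}

/-- The common zeros of a system in the affine chart `X 0 = 1`. -/
def affineZeros (f : Fin r → MvPolynomial (Fin (r + 1)) R) : Set (Fin r → R) :=
  {x | ∀ i, eval (Matrix.vecCons 1 x) (f i) = 0}

theorem eval_smul_of_isHomogeneous {σ R : Type*} [CommSemiring R] {p : MvPolynomial σ R} {n : ℕ}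
    (hp : p.IsHomogeneous n) (a : R) (v : σ → R) : eval (a • v) p = a ^ n * eval v p := by
  rw [eval_eq, eval_eq, Finset.mul_sum]
  refine Finset.sum_congr rfl fun b hb => ?_
  simp only [Pi.smul_apply, smul_eq_mul, mul_pow, Finset.prod_mul_distrib,
    Finset.prod_pow_eq_pow_sum, ← hp.degree_eq_sum_deg_support hb]
  ring

theorem IsTransverse.det_ne_zero [IsDomain R] {f : Fin r → MvPolynomial (Fin (r + 1)) R}
    (ht : IsTransverse f) {x : Fin r → R} (hx : x ∈ affineZeros f) :
    ((affineJacobian f).map (eval (Matrix.vecCons 1 x))).det ≠ 0 :=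
  (isTransverse_iff.1 ht _ hx fun h => one_ne_zero (congrFun h 0)).2

end AffineZeros

section Derivatives

variable {𝕜 : Type*} [NontriviallyNormedField 𝕜]

theorem hasFDerivAt_eval_comp {σ E : Type*} [Fintype σ] [NormedAddCommGroup E] [NormedSpace 𝕜 E]
    {g : σ → E → 𝕜} {g' : σ → E →L[𝕜] 𝕜} {x : E} (hg : ∀ j, HasFDerivAt (g j) (g' j) x)
    (p : MvPolynomial σ 𝕜) :
    HasFDerivAt (fun y => eval (fun j => g j y) p)
      (∑ j, eval (fun j => g j x) (pderiv j p) • g' j) x := by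
  classical
  induction p using MvPolynomial.induction_on with
  | C a =>
    simp only [eval_C, pderiv_C, map_zero]
    refine (hasFDerivAt_const a x).congr_fderiv ?_
    ext w
    simp
  | add p q hp hq =>
    simp only [map_add]
    refine (hp.add hq).congr_fderiv ?_
    ext w
    simp [add_mul, Finset.sum_add_distrib]
  | mul_X p i hp =>
    simp only [map_mul, eval_X]
    refine (hp.mul (hg i)).congr_fderiv ?_
    ext w
    simp [pderiv_X, Pi.single_apply, apply_ite, add_mul, mul_assoc, Finset.sum_add_distrib,
      Finset.mul_sum]

theorem contDiff_eval_map_evalRingHom {σ E : Type*} [NormedAddCommGroup E]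
    [NormedSpace 𝕜 E] {t : E → 𝕜} {g : σ → E → 𝕜} {n} (ht : ContDiff 𝕜 n t)
    (hg : ∀ j, ContDiff 𝕜 n (g j)) (p : MvPolynomial σ (Polynomial 𝕜)) :
    ContDiff 𝕜 n fun y => eval (fun j => g j y) (map (Polynomial.evalRingHom (t y)) p) := by
  induction p using MvPolynomial.induction_on with
  | C a => simpa [Polynomial.coe_aeval_eq_eval] using! (Polynomial.contDiff_aeval a n).comp ht
  | add p q hp hq => simpa using hp.add hq
  | mul_X p i hp => simpa using hp.mul (hg i)

theorem isInvertible_mulVecLin_of_det_ne_zero {n : Type*} [Fintype n] [DecidableEq n]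
    [CompleteSpace 𝕜] {M : Matrix n n 𝕜} (hM : M.det ≠ 0) :
    (LinearMap.toContinuousLinearMap M.mulVecLin).IsInvertible :=
  ⟨(Matrix.toLin'OfInv (M.nonsing_inv_mul hM.isUnit)
    (M.mul_nonsing_inv hM.isUnit)).toContinuousLinearEquiv, rfl⟩

theorem hasFDerivAt_eval_vecCons_one {r : ℕ} [CompleteSpace 𝕜]
    (f : Fin r → MvPolynomial (Fin (r + 1)) 𝕜) (x : Fin r → 𝕜) :
    HasFDerivAt (fun y i => eval (Matrix.vecCons 1 y) (f i))
      (LinearMap.toContinuousLinearMap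
        ((affineJacobian f).map (eval (Matrix.vecCons 1 x))).mulVecLin) x := by
  have hasFDerivAt_coordinate (j : Fin (r + 1)) :
      HasFDerivAt (fun y : Fin r → 𝕜 => Matrix.vecCons 1 y j)
        (Matrix.vecCons 0 (fun k => ContinuousLinearMap.proj k) j : (Fin r → 𝕜) →L[𝕜] 𝕜) x := by
    cases j using Fin.cases with
    | zero => exact hasFDerivAt_const 1 x
    | succ k => exact hasFDerivAt_apply k x
  refine hasFDerivAt_pi'.2 fun i => ?_
  refine (hasFDerivAt_eval_comp hasFDerivAt_coordinate (f i)).congr_fderiv ?_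
  ext w
  simp [Fin.sum_univ_succ, affineJacobian, Matrix.mulVec, dotProduct]

end Derivatives

theorem eventually_ncard_eq_of_branches {P X : Type*} [TopologicalSpace P] [TopologicalSpace X]
    [T2Space X] {Z : P → Set X} {t₀ : P} (finite : (Z t₀).Finite)
    (branch : ∀ x ∈ Z t₀, ∃ φ : P → X, Filter.Tendsto φ (𝓝 t₀) (𝓝 x) ∧
      ∀ᶠ z in 𝓝 (t₀, x), z.2 ∈ Z z.1 ↔ φ z.1 = z.2)
    (no_escape : ∀ O, IsOpen O → Z t₀ ⊆ O → ∀ᶠ t in 𝓝 t₀, Z t ⊆ O) :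
    ∀ᶠ t in 𝓝 t₀, (Z t).ncard = (Z t₀).ncard := by
  obtain ⟨V, hV, disjoint_V⟩ := finite.t2_separation
  rcases isEmpty_or_nonempty X with _ | _
  · simp only [Set.eq_empty_of_isEmpty, Set.ncard_empty, Filter.eventually_true]
  choose! φ tendsto_φ mem_iff using branch
  simp only [nhds_prod_eq, Filter.eventually_prod_iff] at mem_iff
  choose! p hp q hq mem_iff using mem_iff
  have φ_mem : ∀ᶠ t in 𝓝 t₀, ∀ x ∈ Z t₀, p x t ∧ q x (φ x t) ∧ φ x t ∈ V x :=
    (finite.eventually_all).2 fun x hx => (hp x hx).and <|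
      (tendsto_φ x hx).eventually ((hq x hx).and ((hV x).2.mem_nhds (hV x).1))
  have covered := no_escape (⋃ x ∈ Z t₀, interior {y | q x y})
    (isOpen_biUnion fun _ _ => isOpen_interior)
    fun x hx => Set.mem_biUnion hx (mem_interior_iff_mem_nhds.2 (hq x hx))
  filter_upwards [φ_mem, covered] with t φ_mem covered
  refine (Set.ncard_congr (fun x _ => φ x t) (fun x hx => ?_) (fun x y hx hy hxy => ?_)
    fun z hz => ?_).symm
  · exact (mem_iff x hx (φ_mem x hx).1 (φ_mem x hx).2.1).2 rfl
  · by_contra hne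
    refine Set.disjoint_left.1 (disjoint_V hx hy hne) (φ_mem x hx).2.2 ?_
    rw [show φ x t = φ y t from hxy]
    exact (φ_mem y hy).2.2
  · obtain ⟨x, hx, hzx⟩ := Set.mem_iUnion₂.1 (covered hz)
    exact ⟨x, hx, (mem_iff x hx (φ_mem x hx).1 (interior_subset hzx)).1 hz⟩

section Dehomogenization

variable {𝕜 : Type*} {r : ℕ} {δ : Fin r → ℕ}

/-- The coordinates in the affine chart `X 0 = 1` of the projective point represented by `v`,
with junk value `0` on the hyperplane `X 0 = 0`. -/
def dehomogenize [Field 𝕜] (v : Fin (r + 1) → 𝕜) : Fin r → 𝕜 :=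
  (v 0)⁻¹ • Matrix.vecTail v

theorem vecCons_one_dehomogenize [Field 𝕜] {v : Fin (r + 1) → 𝕜} (hv : v 0 ≠ 0) :
    Matrix.vecCons 1 (dehomogenize v) = (v 0)⁻¹ • v := by
  ext j
  cases j using Fin.cases with
  | zero => simp [hv]
  | succ k => rfl

theorem dehomogenize_smul_vecCons_one [Field 𝕜] {a : 𝕜} (ha : a ≠ 0) (x : Fin r → 𝕜) :
    dehomogenize (a • Matrix.vecCons 1 x) = x := by
  ext k
  simp [dehomogenize, Matrix.vecTail, ha]

theorem dehomogenize_mem_affineZeros [Field 𝕜] {f : Fin r → MvPolynomial (Fin (r + 1)) 𝕜}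
    (hf : ∀ i, (f i).IsHomogeneous (δ i)) {v : Fin (r + 1) → 𝕜} (hv : v 0 ≠ 0)
    (zero : ∀ i, eval v (f i) = 0) : dehomogenize v ∈ affineZeros f := fun i => by
  rw [vecCons_one_dehomogenize hv, eval_smul_of_isHomogeneous (hf i), zero i, mul_zero]

theorem continuousAt_dehomogenize [NormedField 𝕜] {v : Fin (r + 1) → 𝕜} (hv : v 0 ≠ 0) :
    ContinuousAt dehomogenize v :=
  ((continuous_apply 0).continuousAt.inv₀ hv).smul
    (continuous_pi fun j : Fin r => continuous_apply j.succ).continuousAt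

theorem exists_mem_sphere_of_mem_affineZeros [RCLike 𝕜]
    {f : Fin r → MvPolynomial (Fin (r + 1)) 𝕜} (hf : ∀ i, (f i).IsHomogeneous (δ i))
    {x : Fin r → 𝕜} (hx : x ∈ affineZeros f) :
    ∃ v ∈ Metric.sphere (0 : Fin (r + 1) → 𝕜) 1, (∀ i, eval v (f i) = 0) ∧
      dehomogenize v = x := by
  have vecCons_ne_zero : (Matrix.vecCons 1 x : Fin (r + 1) → 𝕜) ≠ 0 :=
    fun h => one_ne_zero (congrFun h 0)
  refine ⟨(‖(Matrix.vecCons 1 x : Fin (r + 1) → 𝕜)‖⁻¹ : 𝕜) • Matrix.vecCons 1 x, ?_,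
    fun i => ?_, dehomogenize_smul_vecCons_one ?_ x⟩
  · rw [mem_sphere_zero_iff_norm]
    exact norm_smul_inv_norm vecCons_ne_zero
  · rw [eval_smul_of_isHomogeneous (hf i), hx i, mul_zero]
  · exact inv_ne_zero (RCLike.ofReal_ne_zero.2 (norm_ne_zero_iff.2 vecCons_ne_zero))

end Dehomogenization

section Finiteness

variable {𝕜 : Type*} [RCLike 𝕜] {r : ℕ} {δ : Fin r → ℕ} {f : Fin r → MvPolynomial (Fin (r + 1)) 𝕜}

theorem IsTransverse.isCompact_affineZeros (hf : ∀ i, (f i).IsHomogeneous (δ i))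
    (ht : IsTransverse f) : IsCompact (affineZeros f) := by
  have zeros_compact : IsCompact
      (Metric.sphere (0 : Fin (r + 1) → 𝕜) 1 ∩ {v | ∀ i, eval v (f i) = 0}) := by
    refine (isCompact_sphere _ _).inter_right ?_
    simp only [Set.ofPred_forall]
    exact isClosed_iInter fun i => isClosed_eq (MvPolynomial.continuous_eval _) continuous_const
  have apply_zero_ne_zero : ∀ v ∈ Metric.sphere (0 : Fin (r + 1) → 𝕜) 1 ∩
      {v | ∀ i, eval v (f i) = 0}, v 0 ≠ 0 := fun v hv =>
    (isTransverse_iff.1 ht v hv.2 (ne_zero_of_mem_unit_sphere ⟨v, hv.1⟩)).1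
  convert zeros_compact.image_of_continuousOn fun v hv =>
    (continuousAt_dehomogenize (apply_zero_ne_zero v hv)).continuousWithinAt
  refine Set.Subset.antisymm (fun x hx => ?_) ?_
  · obtain ⟨v, hv, zero, rfl⟩ := exists_mem_sphere_of_mem_affineZeros hf hx
    exact ⟨v, ⟨hv, zero⟩, rfl⟩
  · rintro _ ⟨v, hv, rfl⟩
    exact dehomogenize_mem_affineZeros hf (apply_zero_ne_zero v hv) hv.2

theorem IsTransverse.isDiscrete_affineZeros (ht : IsTransverse f) : IsDiscrete (affineZeros f) := by
  rw [isDiscrete_iff_nhdsNE]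
  intro x hx
  obtain ⟨e, he⟩ := isInvertible_mulVecLin_of_det_ne_zero (ht.det_ne_zero hx)
  have isolated : ∀ᶠ y in 𝓝[≠] x, (fun i => eval (Matrix.vecCons 1 y) (f i)) ≠ 0 :=
    (hasFDerivAt_eval_vecCons_one f x).eventually_ne (he ▸ ⟨_, e.antilipschitz⟩)
  rw [Filter.inf_principal_eq_bot]
  filter_upwards [isolated] with y hy hyZ using hy (funext hyZ)

theorem IsTransverse.finite_affineZeros (hf : ∀ i, (f i).IsHomogeneous (δ i))
    (ht : IsTransverse f) : (affineZeros f).Finite :=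
  (ht.isCompact_affineZeros hf).finite ht.isDiscrete_affineZeros

end Finiteness

section LocalConstancy

/-- The member at the parameter value `t` of a one-parameter family of systems. -/
def specializeAt {ι σ R : Type*} [CommRing R] (f : ι → MvPolynomial σ (Polynomial R)) (t : R) :
    ι → MvPolynomial σ R :=
  fun i => map (Polynomial.evalRingHom t) (f i)

variable {𝕜 : Type*} [RCLike 𝕜] {r : ℕ} {f : Fin r → MvPolynomial (Fin (r + 1)) (Polynomial 𝕜)}
  {δ : Fin r → ℕ} {t₀ : 𝕜}

theorem exists_branch_of_det_ne_zero {x : Fin r → 𝕜} (hx : x ∈ affineZeros (specializeAt f t₀))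
    (hdet : ((affineJacobian (specializeAt f t₀)).map (eval (Matrix.vecCons 1 x))).det ≠ 0) :
    ∃ φ : 𝕜 → Fin r → 𝕜, Filter.Tendsto φ (𝓝 t₀) (𝓝 x) ∧
      ∀ᶠ z in 𝓝 (t₀, x), z.2 ∈ affineZeros (specializeAt f z.1) ↔ φ z.1 = z.2 := by
  let G : 𝕜 × (Fin r → 𝕜) → Fin r → 𝕜 :=
    fun z i => eval (Matrix.vecCons 1 z.2) (specializeAt f z.1 i)
  have contDiff_coordinate (j : Fin (r + 1)) :
      ContDiff 𝕜 1 fun z : 𝕜 × (Fin r → 𝕜) => Matrix.vecCons 1 z.2 j := by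
    cases j using Fin.cases with
    | zero => exact contDiff_const
    | succ k => exact (contDiff_apply 𝕜 𝕜 k).comp contDiff_snd
  have contDiff_G : ContDiff 𝕜 1 G :=
    contDiff_pi.2 fun i => contDiff_eval_map_evalRingHom contDiff_fst contDiff_coordinate (f i)
  have strict := contDiff_G.contDiffAt.hasStrictFDerivAt one_ne_zero (x := (t₀, x))
  have partial_eq : fderiv 𝕜 G (t₀, x) ∘L .inr 𝕜 𝕜 (Fin r → 𝕜) = LinearMap.toContinuousLinearMap
      ((affineJacobian (specializeAt f t₀)).map (eval (Matrix.vecCons 1 x))).mulVecLin :=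
    (strict.hasFDerivAt.comp x (hasFDerivAt_prodMk_right t₀ x)).unique
      (hasFDerivAt_eval_vecCons_one (specializeAt f t₀) x)
  have invertible : (fderiv 𝕜 G (t₀, x) ∘L .inr 𝕜 𝕜 (Fin r → 𝕜)).IsInvertible :=
    partial_eq ▸ isInvertible_mulVecLin_of_det_ne_zero hdet
  have mem_iff (z : 𝕜 × (Fin r → 𝕜)) :
      z.2 ∈ affineZeros (specializeAt f z.1) ↔ G z = G (t₀, x) := by
    rw [show G (t₀, x) = 0 from funext hx]
    exact funext_iff.symm
  refine ⟨strict.implicitFunctionOfProdDomain invertible,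
    strict.tendsto_implicitFunctionOfProdDomain invertible, ?_⟩
  simpa only [mem_iff] using
    strict.eventually_apply_eq_iff_implicitFunctionOfProdDomain invertible

theorem continuous_eval_specializeAt {ι σ : Type*} [Finite σ]
    (f : ι → MvPolynomial σ (Polynomial 𝕜)) (i : ι) :
    Continuous fun z : 𝕜 × (σ → 𝕜) => eval z.2 (specializeAt f z.1 i) := by
  cases nonempty_fintype σ
  exact (contDiff_eval_map_evalRingHom (n := 0) contDiff_fst
    (fun j => (contDiff_apply 𝕜 𝕜 j).comp contDiff_snd) (f i)).continuous

-- Zeros cannot escape to infinity: rescaled to the compact unit sphere they stay close to the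
-- projective zeros of `specializeAt f t₀`, none of which lies on `X 0 = 0`.
theorem eventually_affineZeros_subset (hf : ∀ i, (f i).IsHomogeneous (δ i))
    (ht₀ : IsTransverse (specializeAt f t₀)) {O : Set (Fin r → 𝕜)} (hO : IsOpen O)
    (subset : affineZeros (specializeAt f t₀) ⊆ O) :
    ∀ᶠ t in 𝓝 t₀, affineZeros (specializeAt f t) ⊆ O := by
  have homogeneous (t : 𝕜) (i : Fin r) : (specializeAt f t i).IsHomogeneous (δ i) := (hf i).map _
  have near_sphere : ∀ᶠ t in 𝓝 t₀, ∀ v ∈ Metric.sphere (0 : Fin (r + 1) → 𝕜) 1,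
      (∀ i, eval v (specializeAt f t i) = 0) → dehomogenize v ∈ O := by
    refine (isCompact_sphere _ _).eventually_forall_of_forall_eventually fun v hv => ?_
    by_cases zero : ∀ i, eval v (specializeAt f t₀ i) = 0
    · have v_ne_zero : v ≠ 0 := ne_zero_of_mem_unit_sphere ⟨v, hv⟩
      have v_zero_ne_zero := (isTransverse_iff.1 ht₀ v zero v_ne_zero).1
      have dehomogenize_mem : dehomogenize v ∈ O :=
        subset (dehomogenize_mem_affineZeros (homogeneous t₀) v_zero_ne_zero zero)
      filter_upwards [((continuousAt_dehomogenize v_zero_ne_zero).eventually_mem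
        (hO.mem_nhds dehomogenize_mem)).prod_inr_nhds t₀] with z hz _ using hz
    · obtain ⟨i, hi⟩ := not_forall.1 zero
      filter_upwards [(continuous_eval_specializeAt f i).continuousAt.eventually_ne hi]
        with z hz h using absurd (h i) hz
  filter_upwards [near_sphere] with t ht x hx
  obtain ⟨v, hv, zero, rfl⟩ := exists_mem_sphere_of_mem_affineZeros (homogeneous t) hx
  exact ht v hv zero

theorem IsTransverse.eventually_ncard_affineZeros_eq (hf : ∀ i, (f i).IsHomogeneous (δ i))
    (ht₀ : IsTransverse (specializeAt f t₀)) :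
    ∀ᶠ t in 𝓝 t₀,
      (affineZeros (specializeAt f t)).ncard = (affineZeros (specializeAt f t₀)).ncard :=
  eventually_ncard_eq_of_branches (ht₀.finite_affineZeros fun i => (hf i).map _)
    (fun _ hx => exists_branch_of_det_ne_zero hx (ht₀.det_ne_zero hx))
    fun _ => eventually_affineZeros_subset hf ht₀

end LocalConstancy

section Fermat

variable {R K : Type*} [CommRing R] [Field K] {r : ℕ} {δ : Fin r → ℕ}

/-- The system `X (i + 1) ^ δ i = X 0 ^ δ i`, whose zeros are explicit. It is the base point of
the deformations that compute the number of zeros of an arbitrary transverse system. -/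
def fermatSystem (R : Type*) [CommRing R] (δ : Fin r → ℕ) :
    Fin r → MvPolynomial (Fin (r + 1)) R :=
  fun i => X i.succ ^ δ i - X 0 ^ δ i

theorem isHomogeneous_fermatSystem (i : Fin r) : (fermatSystem R δ i).IsHomogeneous (δ i) :=
  (isHomogeneous_X_pow _ _).sub (isHomogeneous_X_pow _ _)

theorem affineJacobian_fermatSystem :
    affineJacobian (fermatSystem R δ) =
      Matrix.diagonal fun i => C (δ i : R) * X i.succ ^ (δ i - 1) := by
  ext1 i j
  rw [Matrix.diagonal_apply]
  simp only [affineJacobian, fermatSystem, Matrix.of_apply, map_sub, pderiv_pow,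
    pderiv_X_of_ne (Fin.succ_ne_zero j).symm, mul_zero, sub_zero, map_natCast]
  split_ifs with hij
  · rw [hij, pderiv_X_self, mul_one]
  · rw [pderiv_X_of_ne (by simpa using hij), mul_zero]

theorem isTransverse_fermatSystem [CharZero K] (hδ : ∀ i, δ i ≠ 0) :
    IsTransverse (fermatSystem K δ) := by
  refine isTransverse_iff.2 fun v zero v_ne_zero => ?_
  have pow_eq (i : Fin r) : v i.succ ^ δ i = v 0 ^ δ i := by
    simpa [fermatSystem, sub_eq_zero] using zero i
  have apply_zero_ne_zero : v 0 ≠ 0 := fun h => v_ne_zero <| by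
    ext j
    cases j using Fin.cases with
    | zero => exact h
    | succ i => exact eq_zero_of_pow_eq_zero ((pow_eq i).trans (by rw [h, zero_pow (hδ i)]))
  refine ⟨apply_zero_ne_zero, ?_⟩
  rw [affineJacobian_fermatSystem, Matrix.diagonal_map (map_zero _), Matrix.det_diagonal,
    Finset.prod_ne_zero_iff]
  intro i _
  have apply_succ_ne_zero : v i.succ ≠ 0 :=
    (pow_ne_zero_iff (hδ i)).1 ((pow_eq i).trans_ne (pow_ne_zero _ apply_zero_ne_zero))
  simpa using ⟨hδ i, fun h => absurd h apply_succ_ne_zero⟩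

theorem ncard_affineZeros_fermatSystem [IsAlgClosed K] [CharZero K] (hδ : ∀ i, δ i ≠ 0) :
    (affineZeros (fermatSystem K δ)).ncard = ∏ i, δ i := by
  classical
  have affineZeros_eq : affineZeros (fermatSystem K δ) =
      Fintype.piFinset fun i => Polynomial.nthRootsFinset (δ i) (1 : K) := by
    ext x
    simp [affineZeros, fermatSystem, Polynomial.mem_nthRootsFinset (Nat.pos_of_ne_zero (hδ _)),
      sub_eq_zero]
  have card_roots (i : Fin r) : (Polynomial.nthRootsFinset (δ i) (1 : K)).card = δ i := by
    have : NeZero (δ i) := ⟨hδ i⟩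
    obtain ⟨ζ, hζ⟩ := HasEnoughRootsOfUnity.exists_primitiveRoot K (δ i)
    exact hζ.card_nthRootsFinset
  rw [affineZeros_eq, Set.ncard_coe_finset, Fintype.card_piFinset]
  exact Finset.prod_congr rfl fun i _ => card_roots i

end Fermat

section Bezout

variable {r : ℕ} {δ : Fin r → ℕ}

theorem finite_setOf_not_isTransverse_specializeAt {K : Type*} [Field K] [IsAlgClosed K]
    {f : Fin r → MvPolynomial (Fin (r + 1)) (Polynomial K)}
    (hf : ∀ i, (f i).IsHomogeneous (δ i)) {t₀ : K} (ht₀ : IsTransverse (specializeAt f t₀)) :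
    {t | ¬ IsTransverse (specializeAt f t)}.Finite := by
  obtain ⟨a, ha₀, ha⟩ := IsTransverse.exists_forall_map (φ₀ := Polynomial.aeval t₀) hf ht₀
  have a_ne_zero : a ≠ 0 := fun h => ha₀ (by rw [h, map_zero])
  refine (Polynomial.finite_setOfPred_isRoot a_ne_zero).subset fun t ht => ?_
  by_contra hroot
  exact ht (ha (Polynomial.aeval t) hroot)

theorem ncard_affineZeros_specializeAt_eq {f : Fin r → MvPolynomial (Fin (r + 1)) (Polynomial ℂ)}
    (hf : ∀ i, (f i).IsHomogeneous (δ i)) {s t : ℂ} (hs : IsTransverse (specializeAt f s))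
    (ht : IsTransverse (specializeAt f t)) :
    (affineZeros (specializeAt f s)).ncard = (affineZeros (specializeAt f t)).ncard := by
  have preconnected : IsPreconnected {t | IsTransverse (specializeAt f t)} := by
    have cofinite := finite_setOf_not_isTransverse_specializeAt hf hs
    have := cofinite.countable.isConnected_compl_of_one_lt_rank (by simp)
    simpa [Set.compl_ofPred] using this.isPreconnected
  refine preconnected.constant (f := fun t => (affineZeros (specializeAt f t)).ncard)
    (fun u hu => ContinuousAt.continuousWithinAt ?_) hs ht
  exact continuousAt_const.congr
    (Filter.EventuallyEq.symm (IsTransverse.eventually_ncard_affineZeros_eq hf hu))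

theorem IsTransverse.ncard_affineZeros {f : Fin r → MvPolynomial (Fin (r + 1)) ℂ}
    (hf : ∀ i, (f i).IsHomogeneous (δ i)) (hδ : ∀ i, δ i ≠ 0) (ht : IsTransverse f) :
    (affineZeros f).ncard = ∏ i, δ i := by
  let pencil : Fin r → MvPolynomial (Fin (r + 1)) (Polynomial ℂ) := fun i =>
    C (1 - Polynomial.X) * map Polynomial.C (fermatSystem ℂ δ i) +
      C Polynomial.X * map Polynomial.C (f i)
  have homogeneous (i : Fin r) : (pencil i).IsHomogeneous (δ i) :=
    (((isHomogeneous_fermatSystem i).map _).C_mul _).add (((hf i).map _).C_mul _)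
  have map_map_C (t : ℂ) (p : MvPolynomial (Fin (r + 1)) ℂ) :
      map (Polynomial.evalRingHom t) (map Polynomial.C p) = p := by
    rw [map_map, show (Polynomial.evalRingHom t).comp Polynomial.C = RingHom.id ℂ by ext; simp,
      map_id]
  have pencil_zero : specializeAt pencil 0 = fermatSystem ℂ δ := by
    funext i
    simp [specializeAt, pencil, map_map_C]
  have pencil_one : specializeAt pencil 1 = f := by
    funext i
    simp [specializeAt, pencil, map_map_C]
  rw [← ncard_affineZeros_fermatSystem (K := ℂ) hδ, ← pencil_one, ← pencil_zero]
  exact ncard_affineZeros_specializeAt_eq homogeneous (pencil_one.symm ▸ ht)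
    (pencil_zero.symm ▸ isTransverse_fermatSystem hδ)

end Bezout

section ZariskiOpen

variable {R M : Type*} [CommRing R] [AddCommGroup M] [Module R M]

/-- The value at `c` of a polynomial in the linear forms on `M`. -/
def evalDual (c : M) : MvPolynomial (Module.Dual R M) R →ₐ[R] R :=
  aeval fun l => l c

theorem exists_isHomogeneous_map_evalDual {σ : Type*} [Finite σ] {D : ℕ}
    {L : M →ₗ[R] MvPolynomial σ R} (hL : ∀ c, (L c).IsHomogeneous D) :
    ∃ F : MvPolynomial σ (MvPolynomial (Module.Dual R M) R), F.IsHomogeneous D ∧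
      ∀ c, map (evalDual (R := R) c : _ →+* R) F = L c := by
  classical
  cases nonempty_fintype σ
  refine ⟨∑ b ∈ Finset.univ.finsuppAntidiag D, monomial b (X (lcoeff R b ∘ₗ L)),
    IsHomogeneous.sum _ _ _ fun b hb =>
      isHomogeneous_monomial _ (mem_univ_finsuppAntidiag_iff.1 hb), fun c => ?_⟩
  ext b
  rw [coeff_map, coeff_sum]
  simp only [coeff_monomial, Finset.sum_ite_eq', mem_univ_finsuppAntidiag_iff]
  split_ifs with hb
  · exact aeval_X _ _
  · rw [map_zero, (hL c).coeff_eq_zero hb]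

theorem isPolynomialFun_evalDual {M : Type*} [AddCommGroup M] [Module ℂ M]
    (a : MvPolynomial (Module.Dual ℂ M) ℂ) : IsPolynomialFun fun c => evalDual c a := by
  obtain ⟨k, l, -, p, rfl⟩ := exists_fin_rename a
  exact ⟨k, l, p, fun c => aeval_rename _ _ _⟩

theorem isZariskiOpen_of_forall_exists_evalDual_ne_zero {M : Type*} [AddCommGroup M] [Module ℂ M]
    {U : Set M} (hU : ∀ c₀ ∈ U, ∃ a : MvPolynomial (Module.Dual ℂ M) ℂ, evalDual c₀ a ≠ 0 ∧
      ∀ c, evalDual c a ≠ 0 → c ∈ U) :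
    IsZariskiOpen U := by
  refine ⟨{g | IsPolynomialFun g ∧ ∀ c ∈ Uᶜ, g c = 0}, fun g hg => hg.1, ?_⟩
  refine Set.Subset.antisymm (fun c hc g hg => hg.2 c hc) fun c₀ hc₀ hmem => ?_
  obtain ⟨a, ha₀, ha⟩ := hU c₀ hmem
  exact ha₀ (hc₀ _ ⟨isPolynomialFun_evalDual a, fun c hc => by_contra fun h => hc (ha c h)⟩)

theorem isZariskiOpen_setOf_isTransverse {M : Type*} [AddCommGroup M] [Module ℂ M] {r : ℕ}
    {δ : Fin r → ℕ} {L : Fin r → M →ₗ[ℂ] MvPolynomial (Fin (r + 1)) ℂ}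
    (hL : ∀ i c, (L i c).IsHomogeneous (δ i)) :
    IsZariskiOpen {c | IsTransverse fun i => L i c} := by
  choose F homogeneous_F map_F using fun i => exists_isHomogeneous_map_evalDual (hL i)
  have specialize_F (c : M) :
      (fun i => map (evalDual (R := ℂ) c : _ →+* ℂ) (F i)) = fun i => L i c :=
    funext fun i => map_F i c
  refine isZariskiOpen_of_forall_exists_evalDual_ne_zero fun c₀ h₀ => ?_
  obtain ⟨a, ha₀, ha⟩ := IsTransverse.exists_forall_map (φ₀ := evalDual c₀) homogeneous_F
    (by rwa [specialize_F])
  refine ⟨a, ha₀, fun c hc => ?_⟩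
  rw [Set.mem_ofPred_eq, ← specialize_F]
  exact ha (evalDual c) hc

end ZariskiOpen

section Lines

variable {K : Type*} [Field K] {N r : ℕ}

theorem finrank_comap_of_surjective {V W : Type*} [AddCommGroup V] [Module K V] [AddCommGroup W]
    [Module K W] [FiniteDimensional K V] {f : V →ₗ[K] W} (hf : Function.Surjective f)
    (p : Submodule K W) :
    Module.finrank K (p.comap f) = Module.finrank K p + Module.finrank K (LinearMap.ker f) := by
  rw [← LinearMap.finrank_range_add_finrank_ker (f.domRestrict (p.comap f)),
    LinearMap.range_domRestrict, Submodule.map_comap_eq_of_surjective hf, LinearMap.ker_domRestrict]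
  congr 1
  exact (Submodule.submoduleOfEquivOfLe (LinearMap.ker_le_comap f)).finrank_eq

theorem ker_funLeft_succ :
    LinearMap.ker (LinearMap.funLeft K K (Fin.succ : Fin N → Fin (N + 1))) =
      Submodule.span K {Pi.single 0 1} := by
  ext v
  rw [LinearMap.mem_ker, Submodule.mem_span_singleton]
  simp [funext_iff, Fin.forall_fin_succ, eq_comm]

/-- The projective line joining the apex `[1 : 0 : … : 0]` to `[0 : w]`, encoded as a plane in
the underlying vector space. -/
def lineThroughApex (w : Fin N → K) : Submodule K (Fin (N + 1) → K) :=
  (Submodule.span K {w}).comap (LinearMap.funLeft K K Fin.succ)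

theorem mem_lineThroughApex_iff {w : Fin N → K} {v : Fin (N + 1) → K} :
    v ∈ lineThroughApex w ↔ ∃ s a : K, v = Matrix.vecCons s (a • w) := by
  rw [lineThroughApex, Submodule.mem_comap, Submodule.mem_span_singleton]
  simp [funext_iff, Fin.forall_fin_succ, eq_comm]

theorem finrank_eq_two_and_single_mem_iff {W : Submodule K (Fin (N + 1) → K)} :
    Module.finrank K W = 2 ∧ Pi.single 0 1 ∈ W ↔ ∃ w ≠ 0, lineThroughApex w = W := by
  let tail := LinearMap.funLeft K K (Fin.succ : Fin N → Fin (N + 1))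
  have surjective_tail : Function.Surjective tail :=
    LinearMap.funLeft_surjective_of_injective K K _ (Fin.succ_injective N)
  have finrank_comap (p : Submodule K (Fin N → K)) :
      Module.finrank K (p.comap tail) = Module.finrank K p + 1 := by
    rw [finrank_comap_of_surjective surjective_tail, ker_funLeft_succ,
      finrank_span_singleton (by simp)]
  constructor
  · rintro ⟨finrank_W, single_mem⟩
    have comap_map : (W.map tail).comap tail = W := Submodule.comap_map_eq_self <| by
      rwa [ker_funLeft_succ, Submodule.span_singleton_le_iff_mem]
    have finrank_map : Module.finrank K (W.map tail) = 1 := by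
      have := finrank_comap (W.map tail)
      rw [comap_map] at this
      omega
    obtain ⟨w, w_ne_zero, map_eq⟩ :=
      (atom_iff_nonzero_span _).1 (Submodule.isAtom_iff_finrank_eq_one.2 finrank_map)
    exact ⟨w, w_ne_zero, by rw [lineThroughApex, ← map_eq, comap_map]⟩
  · rintro ⟨w, w_ne_zero, rfl⟩
    refine ⟨by rw [lineThroughApex, finrank_comap, finrank_span_singleton w_ne_zero],
      mem_lineThroughApex_iff.2 ⟨1, 0, ?_⟩⟩
    simp [_root_.funext_iff, Fin.forall_fin_succ]

theorem eq_zero_of_forall_sum_pow_mul_eq_zero {ι : Type*} [Fintype ι] [Infinite K] {e : ι → ℕ}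
    (he : Function.Injective e) {a : ι → K} (ha : ∀ s, ∑ i, s ^ e i * a i = 0) : a = 0 := by
  have sum_eq_zero : ∑ i, Polynomial.monomial (e i) (a i) = 0 := Polynomial.funext fun s => by
    simpa [Polynomial.eval_finsetSum, mul_comm] using ha s
  ext i
  classical
  simpa [Polynomial.finsetSum_coeff, Polynomial.coeff_monomial, he.eq_iff] using
    congrArg (Polynomial.coeff · (e i)) sum_eq_zero

theorem eval_sum_eq_zero_on_lineThroughApex_iff [Infinite K] {ι : Type*} [Fintype ι] {e δ : ι → ℕ}
    (he : Function.Injective e) {f : ι → MvPolynomial (Fin N) K}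
    (hf : ∀ i, (f i).IsHomogeneous (δ i)) {w : Fin N → K} :
    (∀ v ∈ lineThroughApex w, eval v (∑ i, X 0 ^ e i * rename Fin.succ (f i)) = 0) ↔
      ∀ i, eval w (f i) = 0 := by
  have eval_sum (s a : K) :
      eval (Matrix.vecCons s (a • w)) (∑ i, X 0 ^ e i * rename Fin.succ (f i)) =
        ∑ i, s ^ e i * (a ^ δ i * eval w (f i)) := by
    simp only [map_sum, map_mul, map_pow, eval_X, Matrix.cons_val_zero, eval_rename,
      ← eval_smul_of_isHomogeneous (hf _)]
    rfl
  constructor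
  · intro h
    refine congrFun (eq_zero_of_forall_sum_pow_mul_eq_zero he fun s => ?_)
    have := h _ (mem_lineThroughApex_iff.2 ⟨s, 1, rfl⟩)
    rw [eval_sum] at this
    simpa using this
  · rintro h v hv
    obtain ⟨s, a, rfl⟩ := mem_lineThroughApex_iff.1 hv
    simp [eval_sum, h]

theorem injective_lineThroughApex_vecCons_one :
    Function.Injective fun x : Fin r → K => lineThroughApex (Matrix.vecCons 1 x) := by
  intro x y hxy
  have span_eq := Submodule.comap_injective_of_surjective
    (LinearMap.funLeft_surjective_of_injective K K _ (Fin.succ_injective (r + 1))) hxy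
  obtain ⟨a, ha⟩ := Submodule.mem_span_singleton.1
    (span_eq.le (Submodule.mem_span_singleton_self (Matrix.vecCons 1 x)))
  obtain rfl : a = 1 := by simpa using congrFun ha 0
  ext i
  simpa using (congrFun ha i.succ).symm

theorem lineThroughApex_vecCons_one_dehomogenize {w : Fin (r + 1) → K} (hw : w 0 ≠ 0) :
    lineThroughApex (Matrix.vecCons 1 (dehomogenize w)) = lineThroughApex w := by
  rw [lineThroughApex, vecCons_one_dehomogenize hw,
    Submodule.span_singleton_smul_eq (inv_ne_zero hw).isUnit, lineThroughApex]

theorem IsTransverse.setOf_lines_eq_image [Infinite K] {e δ : Fin r → ℕ}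
    (he : Function.Injective e) {f : Fin r → MvPolynomial (Fin (r + 1)) K}
    (hf : ∀ i, (f i).IsHomogeneous (δ i)) (ht : IsTransverse f) :
    {W : Submodule K (Fin (r + 1 + 1) → K) | Module.finrank K W = 2 ∧ Pi.single 0 1 ∈ W ∧
        ∀ v ∈ W, eval v (∑ i, X 0 ^ e i * rename Fin.succ (f i)) = 0} =
      (fun x => lineThroughApex (Matrix.vecCons 1 x)) '' affineZeros f := by
  ext W
  rw [Set.mem_ofPred_eq, ← and_assoc, finrank_eq_two_and_single_mem_iff]
  constructor
  · rintro ⟨⟨w, w_ne_zero, rfl⟩, vanish⟩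
    rw [eval_sum_eq_zero_on_lineThroughApex_iff he hf] at vanish
    have apply_zero_ne_zero := (isTransverse_iff.1 ht w vanish w_ne_zero).1
    exact ⟨dehomogenize w, dehomogenize_mem_affineZeros hf apply_zero_ne_zero vanish,
      lineThroughApex_vecCons_one_dehomogenize apply_zero_ne_zero⟩
  · rintro ⟨x, hx, rfl⟩
    exact ⟨⟨_, fun h => one_ne_zero (congrFun h 0), rfl⟩,
      (eval_sum_eq_zero_on_lineThroughApex_iff he hf).2 hx⟩

end Lines

section ConeForms

variable {R : Type*} [CommSemiring R] {N D : ℕ}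

variable (R N D) in
/-- The forms of degree `D` that do not involve `X 0`; they define the cones with apex
`[1 : 0 : … : 0]`. -/
abbrev coneForms : Submodule R (MvPolynomial (Fin (N + 1)) R) :=
  homogeneousSubmodule (Fin (N + 1)) R D ⊓
    Subalgebra.toSubmodule (supported R {j : Fin (N + 1) | j ≠ 0})

/-- The equation of the base of a cone, in the variables other than `X 0`. -/
def baseForm : coneForms R N D →ₗ[R] MvPolynomial (Fin N) R :=
  (killCompl (Fin.succ_injective N)).toLinearMap ∘ₗ (coneForms R N D).subtype

theorem rename_baseForm (p : coneForms R N D) : rename Fin.succ (baseForm p) = (p : _) := by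
  have vars_subset : (p.1.vars : Set (Fin (N + 1))) ⊆ Set.range Fin.succ :=
    (mem_supported.1 p.2.2).trans (Fin.range_succ N).ge
  obtain ⟨q, hq⟩ := exists_rename_eq_of_vars_subset_range _ _ (Fin.succ_injective N) vars_subset
  have baseForm_eq : baseForm p = q :=
    (congrArg _ hq).symm.trans (killCompl_rename_app (Fin.succ_injective N) q)
  rw [baseForm_eq, hq]

theorem isHomogeneous_baseForm (p : coneForms R N D) : (baseForm p).IsHomogeneous D :=
  (IsHomogeneous.rename_isHomogeneous_iff (Fin.succ_injective N)).1 <| by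
    rw [rename_baseForm]
    exact p.2.1

theorem exists_baseForm_eq {q : MvPolynomial (Fin N) R} (hq : q.IsHomogeneous D) :
    ∃ p : coneForms R N D, baseForm p = q := by
  classical
  refine ⟨⟨rename Fin.succ q, hq.rename_isHomogeneous, mem_supported.2 fun j hj => ?_⟩,
    killCompl_rename_app (Fin.succ_injective N) q⟩
  obtain ⟨i, -, rfl⟩ := Finset.mem_image.1 (vars_rename _ _ hj)
  exact Fin.succ_ne_zero i

end ConeForms

theorem prod_add_eq_factorial_div {m : ℕ} (hm : 0 < m) (k : ℕ) :
    ∏ i : Fin k, (m + i) = (m + k - 1).factorial / (m - 1).factorial := by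
  rw [Fin.prod_univ_eq_prod_range (m + ·) k, ← Nat.ascFactorial_eq_prod_range,
    Nat.ascFactorial_eq_div' _ _ hm]

/-- Let `Y = {∑_{i=m}^{d} x₀^{d-i} fᵢ = 0} ⊆ ℙⁿ` with the `fᵢ` general
homogeneous forms of degree `i` in `x₁,…,xₙ`, so that `y = [1:0:…:0]` is the unique singular
point, of multiplicity `m`. If `d = m + n − 2`, then the set of lines in `Y` through `y`
(2-dimensional subspaces of `ℂ^{n+1}` containing `e₀` on which the defining form vanishes)
is finite of cardinality exactly `d!/(m−1)!`. -/
theorem stmt11 (n m d : ℕ) (hm : 1 ≤ m) (hmd : m ≤ d) (hn : 2 ≤ n) (hdeq : d = m + n - 2) :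
    ∃ U : Set (Π _i : Fin (d + 1 - m),
        ((homogeneousSubmodule (Fin (n + 1)) ℂ (m + (_i : ℕ))) ⊓
          (Subalgebra.toSubmodule (supported ℂ {j : Fin (n + 1) | j ≠ 0})) :
            Submodule ℂ (MvPolynomial (Fin (n + 1)) ℂ))),
      IsZariskiOpen U ∧ U.Nonempty ∧
      ∀ c ∈ U,
        ({W : Submodule ℂ (Fin (n + 1) → ℂ) |
            Module.finrank ℂ W = 2 ∧ (Pi.single 0 1 : Fin (n + 1) → ℂ) ∈ W ∧
            ∀ v ∈ W, eval v (∑ i : Fin (d + 1 - m),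
              X 0 ^ (d - (m + (i : ℕ))) * ((c i : MvPolynomial (Fin (n + 1)) ℂ))) = 0}).Finite ∧
        ({W : Submodule ℂ (Fin (n + 1) → ℂ) |
            Module.finrank ℂ W = 2 ∧ (Pi.single 0 1 : Fin (n + 1) → ℂ) ∈ W ∧
            ∀ v ∈ W, eval v (∑ i : Fin (d + 1 - m),
              X 0 ^ (d - (m + (i : ℕ))) * ((c i : MvPolynomial (Fin (n + 1)) ℂ))) = 0}).ncard
          = d.factorial / (m - 1).factorial := by
  obtain rfl : n = (d + 1 - m) + 1 := by omega
  have degree_ne_zero (i : Fin (d + 1 - m)) : m + (i : ℕ) ≠ 0 := by omega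
  have injective_exponent : Function.Injective fun i : Fin (d + 1 - m) => d - (m + (i : ℕ)) :=
    fun i j hij => by simp only at hij; omega
  refine ⟨{c | IsTransverse fun i => baseForm (c i)},
    isZariskiOpen_setOf_isTransverse (L := fun i => baseForm ∘ₗ LinearMap.proj i)
      fun i c => isHomogeneous_baseForm (c i), ?_, fun c transverse => ?_⟩
  · choose c baseForm_c using fun i : Fin (d + 1 - m) =>
      exists_baseForm_eq (isHomogeneous_fermatSystem (R := ℂ) (δ := fun i => m + (i : ℕ)) i)
    exact ⟨c, by simpa only [Set.mem_ofPred_eq, baseForm_c] using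
      isTransverse_fermatSystem degree_ne_zero⟩
  · have homogeneous (i : Fin (d + 1 - m)) := isHomogeneous_baseForm (c i)
    have lines_eq := IsTransverse.setOf_lines_eq_image injective_exponent homogeneous transverse
    simp only [rename_baseForm] at lines_eq
    rw [lines_eq, Set.ncard_image_of_injective _ injective_lineThroughApex_vecCons_one,
      IsTransverse.ncard_affineZeros homogeneous degree_ne_zero transverse,
      prod_add_eq_factorial_div hm, Nat.add_sub_cancel' (by omega), Nat.add_sub_cancel]
    exact ⟨(IsTransverse.finite_affineZeros homogeneous transverse).image _, rfl⟩
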